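/- Let ψ : P⁻¹ℤ → ℝ_{≥0} satisfy ψ(γ) ≤ 1/(2 L(γ)) for all γ, and suppose that the sum Σ_{γ ∈ P⁻¹ℤ} φ(n) ψ(γ)^{r+1} / n converges (where γ = n p_1^{ν_1} ⋯ p_r^{ν_r} and φ is Euler's totient function). Then the set 𝒜(ψ) = { x ∈ ℤ_P : d(γ·x, ι(β)) < ψ(γ) for infinitely many coprime pairs β, γ ∈ P⁻¹ℤ } has measure λ(𝒜(ψ)) = 0. -/

import Mathlib

open MeasureTheory Filter Set

noncomputable section

/-- Borel measurable structure on `ℚ_[q]`. -/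
instance (q : ℕ) [Fact q.Prime] : MeasurableSpace ℚ_[q] := borel _
instance (q : ℕ) [Fact q.Prime] : BorelSpace ℚ_[q] := ⟨rfl⟩

/-- The normalized Haar measure on `ℚ_[q]`, giving the unit ball `ℤ_[q]` measure 1. -/
def padicHaar (q : ℕ) [Fact q.Prime] : Measure ℚ_[q] :=
  Measure.addHaarMeasure
    ⟨⟨Metric.closedBall 0 1, isCompact_closedBall 0 1⟩,
      ⟨0, mem_interior_iff_mem_nhds.2 (Metric.closedBall_mem_nhds 0 one_pos)⟩⟩

variable (r : ℕ) (p : Fin r → ℕ) [∀ i, Fact (p i).Prime]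

/-- The space `ℚ_P = ℝ × ℚ_{p_1} × ⋯ × ℚ_{p_r}`. -/
abbrev QP : Type := ℝ × ((i : Fin r) → ℚ_[p i])

/-- `P⁻¹ℤ = { n p_1^{ν_1} ⋯ p_r^{ν_r} : n, ν_i ∈ ℤ }`, as a set of rationals. -/
def PinvZ : Set ℚ :=
  {q : ℚ | ∃ (n : ℤ) (ν : Fin r → ℤ), q = (n : ℚ) * ∏ i, (p i : ℚ) ^ (ν i)}

/-- The diagonal embedding `ι : ℚ → ℚ_P`. -/
def iota (q : ℚ) : QP r p := ((q : ℝ), fun i => (q : ℚ_[p i]))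

/-- Coordinatewise multiplication of `x ∈ ℚ_P` by a rational number `γ`. -/
def smulQ (γ : ℚ) (x : QP r p) : QP r p :=
  ((γ : ℝ) * x.1, fun i => (γ : ℚ_[p i]) * x.2 i)

/-- The distance `d(x,y) = max_{p ∈ P} |x_p - y_p|_p` on `ℚ_P`. -/
def dP (x y : QP r p) : ℝ :=
  max |x.1 - y.1| (⨆ i, ‖x.2 i - y.2 i‖)

/-- The level `ℓ(γ) = max_{p ∈ P} |γ|_p` of a rational number `γ`. -/
def lev (γ : ℚ) : ℝ :=
  max |(γ : ℝ)| (⨆ i, ‖(γ : ℚ_[p i])‖)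

/-- `L(γ) = max_{p ∈ P} (|γ|_∞ |γ|_{p_1} ⋯ |γ|_{p_r}) / |γ|_p` (which equals
`max_{p ∈ P} n/|γ|_p` for `γ = n p_1^{ν_1} ⋯ p_r^{ν_r}` with `n ∈ ℕ` coprime to the `p i`). -/
def LP (γ : ℚ) : ℝ :=
  max ((|(γ : ℝ)| * ∏ i, ‖(γ : ℚ_[p i])‖) / |(γ : ℝ)|)
    (⨆ i, (|(γ : ℝ)| * ∏ j, ‖(γ : ℚ_[p j])‖) / ‖(γ : ℚ_[p i])‖)

/-- The fundamental domain `ℤ_P = [0,1) × ℤ_{p_1} × ⋯ × ℤ_{p_r}`. -/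
def ZP : Set (QP r p) :=
  {x : QP r p | x.1 ∈ Set.Ico (0 : ℝ) 1 ∧ ∀ i, ‖x.2 i‖ ≤ 1}

/-- The measure `λ` on `ℚ_P`: the product of Lebesgue measure on `ℝ` and the
normalized Haar measures on the `ℚ_{p_i}`. -/
def lamP : Measure (QP r p) :=
  (volume : Measure ℝ).prod (Measure.pi fun i => padicHaar (p i))

/-- Two elements of `P⁻¹ℤ` are coprime if they admit decompositions
`β = m p_1^{μ_1} ⋯ p_r^{μ_r}`, `γ = n p_1^{ν_1} ⋯ p_r^{ν_r}` with `m, n` coprime to all the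
`p i` and `gcd(m,n) = 1`. -/
def CoprimePair (β γ : ℚ) : Prop :=
  ∃ (m n : ℤ) (μ ν : Fin r → ℤ),
    β = (m : ℚ) * ∏ i, (p i : ℚ) ^ (μ i) ∧
    γ = (n : ℚ) * ∏ i, (p i : ℚ) ^ (ν i) ∧
    (∀ i, ¬ ((p i : ℤ) ∣ m)) ∧ (∀ i, ¬ ((p i : ℤ) ∣ n)) ∧ IsCoprime m n

/-- For nonzero `γ = n p_1^{ν_1} ⋯ p_r^{ν_r} ∈ P⁻¹ℤ` with `n ∈ ℕ` coprime to the `p i`,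
`unitPart γ = n`: the positive integer obtained from `γ` by removing all powers of the `p i`. -/
def unitPart (γ : ℚ) : ℕ :=
  (γ.num.natAbs * γ.den) / ∏ i, (p i) ^ ((γ.num.natAbs * γ.den).factorization (p i))

/-- The summand `φ(n) ψ(γ)^{r+1} / n`, where `γ = n p_1^{ν_1} ⋯ p_r^{ν_r}` with `n ∈ ℕ`
coprime to the `p i` and `φ` is Euler's totient function. -/
def dsWeight (ψ : ℚ → ℝ) (γ : ℚ) : ℝ :=
  (Nat.totient (unitPart r p γ) : ℝ) * ψ γ ^ (r + 1) / (unitPart r p γ : ℝ)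

/-- The set `𝒜(ψ)` of `x ∈ ℤ_P` such that `d(γ·x, ι(β)) < ψ(γ)` for infinitely many coprime
pairs `β, γ ∈ P⁻¹ℤ`. -/
def Apsi (ψ : ℚ → ℝ) : Set (QP r p) :=
  {x : QP r p | x ∈ ZP r p ∧
    {bg : ℚ × ℚ | bg.1 ∈ PinvZ r p ∧ bg.2 ∈ PinvZ r p ∧ CoprimePair r p bg.1 bg.2 ∧
      dP r p (smulQ r p bg.2 x) (iota r p bg.1) < ψ bg.2}.Infinite}

/-- The set `ℰ(ψ)` of `x ∈ ℤ_P` such that `d(γ·x, ι(β)) ≤ ψ(γ)` for infinitely many coprime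
pairs `β, γ ∈ P⁻¹ℤ`. -/
def Epsi (ψ : ℚ → ℝ) : Set (QP r p) :=
  {x : QP r p | x ∈ ZP r p ∧
    {bg : ℚ × ℚ | bg.1 ∈ PinvZ r p ∧ bg.2 ∈ PinvZ r p ∧ CoprimePair r p bg.1 bg.2 ∧
      dP r p (smulQ r p bg.2 x) (iota r p bg.1) ≤ ψ bg.2}.Infinite}

/-- The union of boxes
`⋃_{a=1, (a,m)=1}^{m} B_∞(a/m, ρ/(m p_1^{μ_1} ⋯ p_r^{μ_r})) × ∏_i B_{p_i}(a/m, p_i^{μ_i} ρ)`,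
associated to `β = m p_1^{μ_1} ⋯ p_r^{μ_r}` and radius parameter `ρ = ψ(β)`. -/
def Abox (m : ℕ) (μ : Fin r → ℤ) (ρ : ℝ) : Set (QP r p) :=
  ⋃ a ∈ Finset.filter (fun a => Nat.Coprime a m) (Finset.Icc 1 m),
    {x : QP r p |
      x.1 ∈ Metric.ball ((a : ℝ) / (m : ℝ)) (ρ / ((m : ℝ) * ∏ i, (p i : ℝ) ^ (μ i))) ∧
      ∀ i, x.2 i ∈ Metric.ball ((((a : ℚ) / (m : ℚ)) : ℚ_[p i])) ((p i : ℝ) ^ (μ i) * ρ)}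

/-- A box in `ℚ_P`: a product of a ball from each of the constituent spaces. -/
def IsBox (S : Set (QP r p)) : Prop :=
  ∃ (c : ℝ) (ρ : ℝ) (cp : (i : Fin r) → ℚ_[p i]) (ρp : Fin r → ℝ),
    S = {x : QP r p | x.1 ∈ Metric.ball c ρ ∧ ∀ i, x.2 i ∈ Metric.ball (cp i) (ρp i)}

end
lemma pnorm_dec {r : ℕ} {p : Fin r → ℕ} [∀ i, Fact (p i).Prime] (hinj : Function.Injective p)
    (n : ℤ) (ν : Fin r → ℤ) (hn : ∀ i, ¬ ((p i : ℤ) ∣ n)) (i : Fin r) :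
    ‖(((n : ℚ) * ∏ j, (p j : ℚ) ^ (ν j) : ℚ) : ℚ_[p i])‖ = (p i : ℝ) ^ (-ν i) := by
  push_cast
  rw [norm_mul, norm_prod]
  have h1 : ‖(n : ℚ_[p i])‖ = 1 := by
    refine le_antisymm (Padic.norm_int_le_one n) ?_
    by_contra h
    exact hn i ((Padic.norm_intCast_lt_one_iff).1 (not_le.1 h))
  rw [h1, one_mul, Finset.prod_eq_single i]
  · rw [norm_zpow, Padic.norm_p, zpow_neg, inv_zpow]
  · intro j _ hj
    have : ‖((p j : ℕ) : ℚ_[p i])‖ = 1 := by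
      refine le_antisymm (by simpa using Padic.norm_int_le_one (p := p i) (p j : ℤ)) ?_
      by_contra h
      have h2 := (Padic.norm_intCast_lt_one_iff (p := p i) (k := (p j : ℤ))).1 (by simpa using h)
      have h3 : p i ∣ p j := by exact_mod_cast h2
      exact hj (hinj ((Nat.prime_dvd_prime_iff_eq (Fact.out) (Fact.out)).1 h3).symm)
    rw [norm_zpow, this, one_zpow]
  · simp

lemma upart_dec {r : ℕ} {p : Fin r → ℕ} [∀ i, Fact (p i).Prime] (hinj : Function.Injective p)
    (n : ℤ) (ν : Fin r → ℤ) (hn0 : n ≠ 0) (hn : ∀ i, ¬ ((p i : ℤ) ∣ n)) :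
    unitPart r p ((n : ℚ) * ∏ j, (p j : ℚ) ^ (ν j) : ℚ) = n.natAbs := by
  set e : Fin r → ℕ := fun i => (ν i).toNat
  set f : Fin r → ℕ := fun i => (-ν i).toNat
  have hp : ∀ i, (p i).Prime := fun i => Fact.out
  have hγ : ((n : ℚ) * ∏ j, (p j : ℚ) ^ (ν j) : ℚ) =
      ((n * ∏ j, (p j : ℤ) ^ e j : ℤ) : ℚ) / ((∏ j, (p j : ℤ) ^ f j : ℤ) : ℚ) := by
    push_cast
    rw [mul_div_assoc, ← Finset.prod_div_distrib]
    congr 1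
    refine Finset.prod_congr rfl fun i _ => ?_
    have : (p i : ℚ) ≠ 0 := by exact_mod_cast (hp i).ne_zero
    rw [← zpow_natCast, ← zpow_natCast, ← zpow_sub₀ this]
    congr 1
    simp only [e, f]; omega
  have hcop : Nat.Coprime (n * ∏ j, (p j : ℤ) ^ e j : ℤ).natAbs (∏ j, (p j : ℤ) ^ f j : ℤ).natAbs := by
    rw [← Int.isCoprime_iff_nat_coprime]
    refine IsCoprime.prod_right fun i _ => ?_
    refine IsCoprime.mul_left ?_ (IsCoprime.prod_left fun j _ => ?_)
    · refine IsCoprime.pow_right ?_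
      exact ((Nat.prime_iff_prime_int.1 (hp i)).irreducible.coprime_iff_not_dvd.2 (hn i)).symm
    · by_cases hij : j = i
      · subst hij
        by_cases h : 0 ≤ ν j
        · have : f j = 0 := by simp only [f]; omega
          rw [this]; simpa using isCoprime_one_right
        · have : e j = 0 := by simp only [e]; omega
          rw [this]; simpa using isCoprime_one_left
      · refine IsCoprime.pow ?_
        exact Nat.isCoprime_iff_coprime.2
          ((Nat.coprime_primes (hp j) (hp i)).2 fun h => hij (hinj h))
  have hpos : 0 < (∏ j, (p j : ℤ) ^ f j : ℤ) :=
    Finset.prod_pos fun i _ => pow_pos (by exact_mod_cast (hp i).pos) _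
  have hnum := Rat.num_div_eq_of_coprime hpos hcop
  have hden := Rat.den_div_eq_of_coprime hpos hcop
  rw [← hγ] at hnum hden
  have hN : ((n : ℚ) * ∏ j, (p j : ℚ) ^ (ν j) : ℚ).num.natAbs *
      ((n : ℚ) * ∏ j, (p j : ℚ) ^ (ν j) : ℚ).den = n.natAbs * ∏ j, (p j) ^ (e j + f j) := by
    have hden' : ((n : ℚ) * ∏ j, (p j : ℚ) ^ (ν j) : ℚ).den = ∏ j, (p j) ^ f j := by
      exact_mod_cast hden
    rw [hnum, hden', Int.natAbs_mul, mul_assoc]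
    congr 1
    have : (∏ j, (p j : ℤ) ^ e j) = ((∏ j, (p j) ^ e j : ℕ) : ℤ) := by push_cast; rfl
    rw [this, Int.natAbs_natCast, ← Finset.prod_mul_distrib]
    simp_rw [pow_add]
  have hpr0 : ∏ j, (p j) ^ (e j + f j) ≠ 0 :=
    Finset.prod_ne_zero_iff.2 fun i _ => pow_ne_zero _ (hp i).ne_zero
  unfold unitPart
  rw [hN]
  have hfac : ∀ i, (n.natAbs * ∏ j, (p j) ^ (e j + f j)).factorization (p i) = e i + f i := by
    intro i
    rw [Nat.factorization_mul (by simpa using hn0) hpr0, Finsupp.add_apply,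
      Nat.factorization_eq_zero_of_not_dvd (fun h => hn i (Int.natCast_dvd.2 h)), zero_add,
      Nat.factorization_prod (fun j _ => pow_ne_zero _ (hp j).ne_zero), Finsupp.finsetSum_apply,
      Finset.sum_eq_single i]
    · rw [(hp i).factorization_pow]; simp
    · intro j _ hj
      rw [(hp j).factorization_pow, Finsupp.single_apply, if_neg (fun h => hj (hinj h))]
    · simp
  simp_rw [hfac]
  exact Nat.mul_div_cancel _ (Nat.pos_of_ne_zero hpr0)

instance (q : ℕ) [Fact q.Prime] : (padicHaar q).IsAddHaarMeasure := by
  unfold padicHaar; infer_instance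

lemma padicHaar_unit (q : ℕ) [Fact q.Prime] : padicHaar q (Metric.closedBall 0 1) = 1 :=
  Measure.addHaarMeasure_self

lemma padicHaar_step (q : ℕ) [hq : Fact q.Prime] (k : ℤ) :
    padicHaar q (Metric.closedBall 0 ((q : ℝ) ^ (k + 1))) =
      q * padicHaar q (Metric.closedBall 0 ((q : ℝ) ^ k)) := by
  have hq0 : (q : ℚ_[q]) ≠ 0 := by exact_mod_cast hq.out.ne_zero
  have hqr : (0 : ℝ) < q := by exact_mod_cast hq.out.pos
  set c : ℕ → ℚ_[q] := fun a => (a : ℚ_[q]) * (q : ℚ_[q]) ^ (-(k + 1))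
  have hn : ‖(q : ℚ_[q]) ^ (-(k + 1))‖ = (q : ℝ) ^ (k + 1) := by
    rw [Padic.norm_p_zpow, neg_neg]
  have key : Metric.closedBall (0 : ℚ_[q]) ((q : ℝ) ^ (k + 1)) =
      ⋃ a ∈ Finset.range q, Metric.closedBall (c a) ((q : ℝ) ^ k) := by
    ext x
    simp only [Metric.mem_closedBall, dist_zero_right, mem_iUnion, Finset.mem_range, exists_prop]
    constructor
    · intro hx
      have hx1 : ‖x * (q : ℚ_[q]) ^ (k + 1)‖ ≤ 1 := by
        rw [norm_mul, Padic.norm_p_zpow, zpow_neg]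
        exact mul_inv_le_one_of_le₀ hx (by positivity)
      obtain ⟨y, hy⟩ : ∃ y : ℤ_[q], (y : ℚ_[q]) = x * (q : ℚ_[q]) ^ (k + 1) := ⟨⟨_, hx1⟩, rfl⟩
      obtain ⟨a, ha, ha'⟩ := PadicInt.exists_mem_range y
      refine ⟨a, ha, ?_⟩
      have h2 : ‖x * (q : ℚ_[q]) ^ (k + 1) - a‖ < 1 := by
        rw [IsLocalRing.mem_maximalIdeal, PadicInt.mem_nonunits, PadicInt.norm_def,
          PadicInt.coe_sub, PadicInt.coe_natCast, hy] at ha'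
        exact ha'
      have h3 : ‖x * (q : ℚ_[q]) ^ (k + 1) - a‖ ≤ (q : ℝ) ^ (-1 : ℤ) := by
        rw [Padic.norm_le_pow_iff_norm_lt_pow_add_one]; simpa using h2
      have h4 : x - c a = (x * (q : ℚ_[q]) ^ (k + 1) - a) * (q : ℚ_[q]) ^ (-(k + 1)) := by
        rw [sub_mul, mul_assoc, ← zpow_add₀ hq0]; simp [c]
      rw [dist_eq_norm, h4, norm_mul, hn]
      calc _ ≤ (q : ℝ) ^ (-1 : ℤ) * (q : ℝ) ^ (k + 1) := by gcongr
        _ = _ := by rw [← zpow_add₀ hqr.ne']; congr 1; ring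
    · rintro ⟨a, ha, hx⟩
      have h5 : ‖c a‖ ≤ (q : ℝ) ^ (k + 1) := by
        simp only [c]; rw [norm_mul, hn]
        have := Padic.norm_int_le_one (p := q) (a : ℤ)
        simp only [Int.cast_natCast] at this
        exact mul_le_of_le_one_left (by positivity) this
      have h6 : ‖x - c a‖ ≤ (q : ℝ) ^ (k + 1) := by
        rw [← dist_eq_norm]
        exact hx.trans (zpow_le_zpow_right₀ (by exact_mod_cast hq.out.one_le) (by omega))
      calc ‖x‖ = ‖(x - c a) + c a‖ := by simp
        _ ≤ max ‖x - c a‖ ‖c a‖ := Padic.nonarchimedean _ _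
        _ ≤ _ := max_le h6 h5
  rw [key, measure_biUnion_finset]
  · have : ∀ a, padicHaar q (Metric.closedBall (c a) ((q : ℝ) ^ k)) =
        padicHaar q (Metric.closedBall 0 ((q : ℝ) ^ k)) := fun a =>
      Measure.addHaar_closedBall_center _ _ _
    simp [this]
  · intro a ha b hb hab
    simp only [Finset.coe_range, mem_Iio] at ha hb
    refine Set.disjoint_left.2 fun x hxa hxb => hab ?_
    have h1 : ‖c a - c b‖ ≤ (q : ℝ) ^ k := by
      rw [Metric.mem_closedBall, dist_eq_norm] at hxa hxb
      rw [norm_sub_rev] at hxa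
      calc ‖c a - c b‖ = ‖(c a - x) + (x - c b)‖ := by congr 1; ring
        _ ≤ max _ _ := Padic.nonarchimedean _ _
        _ ≤ _ := max_le hxa hxb
    have h2 : c a - c b = (((a : ℤ) - b : ℤ) : ℚ_[q]) * (q : ℚ_[q]) ^ (-(k + 1)) := by
      simp only [c]; push_cast; ring
    rw [h2, norm_mul, hn] at h1
    have h3 : ‖(((a : ℤ) - b : ℤ) : ℚ_[q])‖ < 1 := by
      by_contra h
      have : (q : ℝ) ^ (k + 1) ≤ (q : ℝ) ^ k :=
        (le_mul_of_one_le_left (by positivity) (not_lt.1 h)).trans h1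
      have h7 := zpow_lt_zpow_right₀ (a := (q : ℝ)) (by exact_mod_cast hq.out.one_lt)
        (show k < k + 1 by omega)
      linarith
    have h4 := (Padic.norm_intCast_lt_one_iff).1 h3
    have := Int.eq_zero_of_abs_lt_dvd h4 (by rw [abs_lt]; constructor <;> omega)
    omega
  · intro a _
    exact Metric.isClosed_closedBall.measurableSet

lemma padicHaar_closedBall (q : ℕ) [hq : Fact q.Prime] (k : ℤ) :
    padicHaar q (Metric.closedBall 0 ((q : ℝ) ^ k)) = ENNReal.ofReal ((q : ℝ) ^ k) := by
  have hqr : (0 : ℝ) < q := by exact_mod_cast hq.out.pos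
  have hs : ∀ k : ℤ, ENNReal.ofReal ((q : ℝ) ^ (k + 1)) = q * ENNReal.ofReal ((q : ℝ) ^ k) := by
    intro k
    rw [zpow_add₀ hqr.ne', zpow_one, mul_comm, ENNReal.ofReal_mul hqr.le, ENNReal.ofReal_natCast]
  induction k using Int.induction_on with
  | zero => simpa using padicHaar_unit q
  | succ i ih => rw [padicHaar_step, ih, hs]
  | pred i ih =>
    have h1 := padicHaar_step q (-i - 1)
    have h2 := hs (-i - 1)
    rw [sub_add_cancel] at h1 h2
    rw [ih, h2] at h1
    exact ((ENNReal.mul_right_inj (by exact_mod_cast hq.out.ne_zero) (ENNReal.natCast_ne_top q)).1 h1).symm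

lemma padicHaar_ball_le (q : ℕ) [hq : Fact q.Prime] (c : ℚ_[q]) (ρ : ℝ) :
    padicHaar q (Metric.ball c ρ) ≤ ENNReal.ofReal ρ := by
  rcases le_or_gt ρ 0 with h | h
  · simp [Metric.ball_eq_empty.2 h]
  obtain ⟨k, hk1, hk2⟩ := exists_mem_Ioc_zpow h (show (1 : ℝ) < q by exact_mod_cast hq.out.one_lt)
  rw [Measure.addHaar_ball_center]
  calc _ ≤ padicHaar q (Metric.closedBall 0 ((q : ℝ) ^ k)) := by
        refine measure_mono fun x hx => ?_
        rw [mem_ball_zero_iff] at hx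
        rw [mem_closedBall_zero_iff, Padic.norm_le_pow_iff_norm_lt_pow_add_one]
        exact hx.trans_le hk2
    _ = _ := padicHaar_closedBall q k
    _ ≤ _ := ENNReal.ofReal_le_ofReal hk1.le

def Sbg (r : ℕ) (p : Fin r → ℕ) [∀ i, Fact (p i).Prime] (ψ : ℚ → ℝ) (β γ : ℚ) : Set (QP r p) :=
  {x | x ∈ ZP r p ∧ γ ∈ PinvZ r p ∧ CoprimePair r p β γ ∧
    dP r p (smulQ r p γ x) (iota r p β) < ψ γ}

lemma dP_lt {r : ℕ} {p : Fin r → ℕ} [∀ i, Fact (p i).Prime] {γ β : ℚ} {x : QP r p} {t : ℝ}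
    (h : dP r p (smulQ r p γ x) (iota r p β) < t) :
    |(γ : ℝ) * x.1 - β| < t ∧ ∀ i, ‖(γ : ℚ_[p i]) * x.2 i - β‖ < t := by
  unfold dP at h
  rw [max_lt_iff] at h
  refine ⟨h.1, fun i => lt_of_le_of_lt ?_ h.2⟩
  exact le_ciSup (f := fun i => ‖(smulQ r p γ x).2 i - (iota r p β).2 i‖)
    (Set.finite_range _).bddAbove i

lemma card_cop (n : ℕ) (hn : 0 < n) :
    ((Finset.range (n + 1)).filter (fun a => Nat.Coprime n a)).card ≤ 2 * n.totient := by
  rw [Finset.range_add_one, Finset.filter_insert]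
  have h : 0 < n.totient := Nat.totient_pos.2 hn
  have h2 : ((Finset.range n).filter (fun a => Nat.Coprime n a)).card = n.totient := rfl
  split_ifs
  · refine (Finset.card_insert_le _ _).trans ?_
    omega
  · omega

lemma prod_norm_dec {r : ℕ} {p : Fin r → ℕ} [∀ i, Fact (p i).Prime] (hinj : Function.Injective p)
    (n : ℤ) (ν : Fin r → ℤ) (hn : ∀ i, ¬ ((p i : ℤ) ∣ n)) (γ : ℚ)
    (hγ : γ = (n : ℚ) * ∏ j, (p j : ℚ) ^ (ν j)) :
    |(γ : ℝ)| * ∏ i, ‖(γ : ℚ_[p i])‖ = (n.natAbs : ℝ) := by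
  have hp : ∀ i, (0 : ℝ) < (p i : ℝ) := fun i => by exact_mod_cast (Fact.out : (p i).Prime).pos
  have h1 : ∀ i, ‖(γ : ℚ_[p i])‖ = (p i : ℝ) ^ (-ν i) := fun i => by
    rw [hγ]; exact pnorm_dec hinj n ν hn i
  simp_rw [h1]
  rw [hγ]
  push_cast
  rw [abs_mul, Finset.abs_prod, mul_assoc, ← Finset.prod_mul_distrib, Finset.prod_eq_one, mul_one,
    Nat.cast_natAbs, Int.cast_abs]
  intro i _
  rw [abs_of_pos (zpow_pos (hp i) _), ← zpow_add₀ (hp i).ne']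
  simp

lemma le_LP {r : ℕ} {p : Fin r → ℕ} [∀ i, Fact (p i).Prime] (γ : ℚ) :
    (|(γ : ℝ)| * ∏ i, ‖(γ : ℚ_[p i])‖) / |(γ : ℝ)| ≤ LP r p γ ∧
    ∀ i, (|(γ : ℝ)| * ∏ j, ‖(γ : ℚ_[p j])‖) / ‖(γ : ℚ_[p i])‖ ≤ LP r p γ := by
  refine ⟨le_max_left _ _, fun i => le_max_of_le_right ?_⟩
  exact le_ciSup (f := fun i => (|(γ : ℝ)| * ∏ j, ‖(γ : ℚ_[p j])‖) / ‖(γ : ℚ_[p i])‖)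
    (Set.finite_range _).bddAbove i

lemma S_zero {r : ℕ} {p : Fin r → ℕ} [∀ i, Fact (p i).Prime] (ψ : ℚ → ℝ)
    (hψL : ∀ γ, ψ γ ≤ 1 / (2 * LP r p γ)) (β : ℚ) : Sbg r p ψ β 0 = ∅ := by
  refine Set.eq_empty_of_forall_notMem fun x hx => ?_
  have h1 := (dP_lt hx.2.2.2).1
  have h2 := hψL 0
  have h3 : LP r p 0 = 0 := by simp [LP]
  rw [h3] at h2
  simp only [mul_zero, div_zero] at h2
  linarith [abs_nonneg (((0 : ℚ) : ℝ) * x.1 - β)]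

lemma S_meas {r : ℕ} {p : Fin r → ℕ} [∀ i, Fact (p i).Prime] (ψ : ℚ → ℝ)
    (hψ0 : ∀ γ, 0 ≤ ψ γ) (β γ : ℚ) (hγ0 : γ ≠ 0) :
    lamP r p (Sbg r p ψ β γ) ≤
      ENNReal.ofReal (2 * ψ γ ^ (r + 1) / (|(γ : ℝ)| * ∏ i, ‖(γ : ℚ_[p i])‖)) := by
  have hg : (0 : ℝ) < |(γ : ℝ)| := abs_pos.2 (by exact_mod_cast hγ0)
  have hgi0 : ∀ i, (γ : ℚ_[p i]) ≠ 0 := fun i => by exact_mod_cast hγ0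
  have hgi : ∀ i, 0 < ‖(γ : ℚ_[p i])‖ := fun i => norm_pos_iff.2 (hgi0 i)
  have hsub : Sbg r p ψ β γ ⊆ (Metric.ball ((β : ℝ) / γ) (ψ γ / |(γ : ℝ)|)) ×ˢ
      (Set.univ.pi fun i => Metric.ball ((β : ℚ_[p i]) / γ) (ψ γ / ‖(γ : ℚ_[p i])‖)) := by
    intro x hx
    obtain ⟨h1, h2⟩ := dP_lt hx.2.2.2
    refine ⟨?_, fun i _ => ?_⟩
    · rw [Metric.mem_ball, Real.dist_eq, lt_div_iff₀ hg, ← abs_mul]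
      have : (x.1 - (β : ℝ) / γ) * γ = γ * x.1 - β := by
        have : (γ : ℝ) ≠ 0 := by exact_mod_cast hγ0
        field_simp
      rwa [this]
    · rw [Metric.mem_ball, dist_eq_norm, lt_div_iff₀ (hgi i), ← norm_mul]
      have : (x.2 i - (β : ℚ_[p i]) / γ) * γ = γ * x.2 i - β := by
        have := hgi0 i
        field_simp
      rw [this]; exact h2 i
  refine (measure_mono hsub).trans ?_
  unfold lamP
  rw [Measure.prod_prod, Measure.pi_pi, Real.volume_ball]
  calc _ ≤ ENNReal.ofReal (2 * (ψ γ / |(γ : ℝ)|)) *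
        ∏ i, ENNReal.ofReal (ψ γ / ‖(γ : ℚ_[p i])‖) := by
        gcongr with i
        exact padicHaar_ball_le _ _ _
    _ = _ := by
        rw [← ENNReal.ofReal_prod_of_nonneg (fun i _ => div_nonneg (hψ0 γ) (norm_nonneg _)),
          ← ENNReal.ofReal_mul (by have := hψ0 γ; positivity), Finset.prod_div_distrib]
        congr 1
        simp only [Finset.prod_const, Finset.card_univ, Fintype.card_fin]
        rw [pow_succ, mul_comm (|(γ : ℝ)|), ← div_div]
        ring

lemma S_beta {r : ℕ} {p : Fin r → ℕ} [∀ i, Fact (p i).Prime] (hinj : Function.Injective p)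
    (ψ : ℚ → ℝ) (hψL : ∀ γ, ψ γ ≤ 1 / (2 * LP r p γ)) (β γ : ℚ) (hγ0 : γ ≠ 0)
    (hne : (Sbg r p ψ β γ).Nonempty) :
    0 < unitPart r p γ ∧
    |(γ : ℝ)| * ∏ i, ‖(γ : ℚ_[p i])‖ = (unitPart r p γ : ℝ) ∧
    ∃ a ∈ (Finset.range (unitPart r p γ + 1)).filter (fun a => Nat.Coprime (unitPart r p γ) a),
      β = (a : ℚ) * γ / (unitPart r p γ : ℚ) := by
  obtain ⟨x, ⟨hx0, hxi⟩, hγP, ⟨m, n, μ, ν, hβ, hγ, hm, hn, hmn⟩, hd⟩ := hne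
  obtain ⟨h1, h2⟩ := dP_lt hd
  have hn0 : n ≠ 0 := by rintro rfl; simp [hγ] at hγ0
  have hu : unitPart r p γ = n.natAbs := by rw [hγ]; exact upart_dec hinj n ν hn0 hn
  have hpn := prod_norm_dec hinj n ν hn γ hγ
  rw [hu]
  have hpos : 0 < n.natAbs := Int.natAbs_pos.2 hn0
  refine ⟨hpos, hpn, ?_⟩
  set N := n.natAbs with hN
  have hNR : (1 : ℝ) ≤ N := by exact_mod_cast hpos
  have hNQ : (N : ℚ) ≠ 0 := by exact_mod_cast hpos.ne'
  have hp0 : ∀ i, (p i : ℚ) ≠ 0 := fun i => by exact_mod_cast (Fact.out : (p i).Prime).ne_zero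
  have hgR0 : (γ : ℝ) ≠ 0 := by exact_mod_cast hγ0
  have hg : (0 : ℝ) < |(γ : ℝ)| := abs_pos.2 hgR0
  have hgi0 : ∀ i, (γ : ℚ_[p i]) ≠ 0 := fun i => by exact_mod_cast hγ0
  have hgi : ∀ i, 0 < ‖(γ : ℚ_[p i])‖ := fun i => norm_pos_iff.2 (hgi0 i)
  obtain ⟨hL1, hL2⟩ := le_LP (p := p) γ
  rw [hpn] at hL1
  simp_rw [hpn] at hL2
  have hψ1 : ψ γ ≤ |(γ : ℝ)| / (2 * N) := by
    refine (hψL γ).trans ?_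
    have : |(γ : ℝ)| / (2 * N) = 1 / (2 * (N / |(γ : ℝ)|)) := by field_simp
    rw [this]
    gcongr
  have hψ2 : ∀ i, ψ γ ≤ ‖(γ : ℚ_[p i])‖ := by
    intro i
    have hgi' := hgi i
    have h3 : ψ γ ≤ ‖(γ : ℚ_[p i])‖ / (2 * N) := by
      refine (hψL γ).trans ?_
      have : ‖(γ : ℚ_[p i])‖ / (2 * N) = 1 / (2 * (N / ‖(γ : ℚ_[p i])‖)) := by field_simp
      rw [this]
      have := hL2 i
      gcongr
    exact h3.trans (div_le_self hgi'.le (by linarith))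
  -- the quotient is integral at all `p i`
  have hle : ∀ i, ν i ≤ μ i := by
    intro i
    have h3 : ‖(β : ℚ_[p i])‖ ≤ ‖(γ : ℚ_[p i])‖ := by
      have e : (β : ℚ_[p i]) = (γ : ℚ_[p i]) * x.2 i + -((γ : ℚ_[p i]) * x.2 i - β) := by ring
      rw [e]
      refine (Padic.nonarchimedean _ _).trans (max_le ?_ ?_)
      · rw [norm_mul]; exact mul_le_of_le_one_right (norm_nonneg _) (hxi i)
      · rw [norm_neg]; exact (h2 i).le.trans (hψ2 i)
    have h4 : (p i : ℝ) ^ (-μ i) ≤ (p i : ℝ) ^ (-ν i) := by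
      rw [← pnorm_dec hinj m μ hm i, ← pnorm_dec hinj n ν hn i, ← hβ, ← hγ]; exact h3
    have h5 := (zpow_le_zpow_iff_right₀
      (show (1 : ℝ) < p i by exact_mod_cast (Fact.out : (p i).Prime).one_lt)).1 h4
    omega
  set b : ℤ := n.sign * (m * ∏ i, (p i : ℤ) ^ (μ i - ν i).toNat) with hb
  have hcop : IsCoprime n b := by
    refine IsCoprime.mul_right ?_ (IsCoprime.mul_right hmn.symm (IsCoprime.prod_right fun i _ => ?_))
    · rcases lt_or_gt_of_ne hn0 with h | h
      · rw [Int.sign_eq_neg_one_of_neg h]; exact isCoprime_one_right.neg_right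
      · rw [Int.sign_eq_one_of_pos h]; exact isCoprime_one_right
    · refine IsCoprime.pow_right ?_
      exact ((Nat.prime_iff_prime_int.1 (Fact.out : (p i).Prime)).irreducible.coprime_iff_not_dvd.2
        (hn i)).symm
  have hbeq : β * N = b * γ := by
    have e1 : β = (m : ℚ) * (∏ i, (p i : ℚ) ^ (μ i - ν i).toNat) * ∏ i, (p i : ℚ) ^ ν i := by
      rw [hβ, mul_assoc, ← Finset.prod_mul_distrib]
      congr 1
      refine Finset.prod_congr rfl fun i _ => ?_
      rw [← zpow_natCast, ← zpow_add₀ (hp0 i)]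
      congr 1
      have := hle i
      omega
    have e2 : (N : ℚ) = n.sign * n := by
      have := (Int.sign_mul_self_eq_natAbs n).symm
      rw [← hN] at this
      exact_mod_cast congrArg (fun z : ℤ => (z : ℚ)) this
    rw [e1, e2, hb, hγ]
    push_cast
    ring
  have hβb : β = (b : ℚ) * γ / N := by rw [← hbeq]; field_simp
  -- bounds
  have hbR : (β : ℝ) = (b : ℝ) * γ / N := by exact_mod_cast congrArg (fun q : ℚ => (q : ℝ)) hβb
  have h6 : |(N : ℝ) * x.1 - b| < 1 / 2 := by
    have e : (γ : ℝ) * x.1 - β = (γ / N) * (N * x.1 - b) := by rw [hbR]; field_simp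
    rw [e, abs_mul, abs_div, Nat.abs_cast] at h1
    have h7 := h1.trans_le hψ1
    have e2 : |(γ : ℝ)| / (2 * N) = |(γ : ℝ)| / N * (1 / 2) := by field_simp
    rw [e2] at h7
    exact lt_of_mul_lt_mul_left h7 (by positivity)
  rw [abs_lt] at h6
  have hx1 : 0 ≤ (N : ℝ) * x.1 := mul_nonneg (by linarith) hx0.1
  have hx2 : (N : ℝ) * x.1 ≤ N := mul_le_of_le_one_right (by linarith) hx0.2.le
  have hb0 : 0 ≤ b := by
    have : (-1 : ℝ) < b := by linarith
    have : (-1 : ℤ) < b := by exact_mod_cast this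
    omega
  have hbN : b < N + 1 := by
    have : (b : ℝ) < N + 1 := by linarith
    exact_mod_cast this
  refine ⟨b.toNat, ?_, ?_⟩
  · rw [Finset.mem_filter, Finset.mem_range]
    refine ⟨by omega, ?_⟩
    rw [Int.isCoprime_iff_nat_coprime] at hcop
    have : b.toNat = b.natAbs := by omega
    rw [this]; exact hcop
  · have : ((b.toNat : ℕ) : ℚ) = (b : ℚ) := by exact_mod_cast Int.toNat_of_nonneg hb0
    rw [this]; exact hβb

lemma S_sum {r : ℕ} {p : Fin r → ℕ} [∀ i, Fact (p i).Prime] (hinj : Function.Injective p)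
    (ψ : ℚ → ℝ) (hψ0 : ∀ γ, 0 ≤ ψ γ) (hψL : ∀ γ, ψ γ ≤ 1 / (2 * LP r p γ)) (γ : ℚ) :
    ∑' β : ℚ, lamP r p (Sbg r p ψ β γ) ≤
      (PinvZ r p).indicator (fun γ => 4 * ENNReal.ofReal (dsWeight r p ψ γ)) γ := by
  by_cases hE : ∀ β, Sbg r p ψ β γ = ∅
  · simp [hE]
  push Not at hE
  obtain ⟨β₀, hβ₀⟩ := hE
  have hγ0 : γ ≠ 0 := by
    rintro rfl
    rw [S_zero ψ hψL] at hβ₀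
    exact Set.not_nonempty_empty hβ₀
  obtain ⟨hu0, hprod, -⟩ := S_beta hinj ψ hψL β₀ γ hγ0 hβ₀
  have hγP : γ ∈ PinvZ r p := hβ₀.choose_spec.2.1
  rw [Set.indicator_of_mem hγP]
  set u := unitPart r p γ with hu
  set F : Finset ℚ := ((Finset.range (u + 1)).filter (fun a => Nat.Coprime u a)).image
    (fun a : ℕ => (a : ℚ) * γ / (u : ℚ))
  rw [tsum_eq_sum (s := F)]
  · have hcard : F.card ≤ 2 * u.totient := Finset.card_image_le.trans (card_cop u hu0)
    calc ∑ β ∈ F, lamP r p (Sbg r p ψ β γ)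
        ≤ ∑ β ∈ F, ENNReal.ofReal (2 * ψ γ ^ (r + 1) / u) := by
          refine Finset.sum_le_sum fun β _ => ?_
          rw [← hprod]
          exact S_meas ψ hψ0 β γ hγ0
      _ = F.card * ENNReal.ofReal (2 * ψ γ ^ (r + 1) / u) := by simp
      _ ≤ ((2 * u.totient : ℕ) : ENNReal) * ENNReal.ofReal (2 * ψ γ ^ (r + 1) / u) := by
          gcongr
      _ = _ := by
          have h4 : (4 : ENNReal) = ENNReal.ofReal 4 := by simp
          rw [← ENNReal.ofReal_natCast, h4, ← ENNReal.ofReal_mul (by positivity),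
            ← ENNReal.ofReal_mul (by positivity)]
          congr 1
          unfold dsWeight
          rw [← hu]
          push_cast
          ring
  · intro β hβ
    by_cases hne : (Sbg r p ψ β γ).Nonempty
    · obtain ⟨-, -, a, ha, hβa⟩ := S_beta hinj ψ hψL β γ hγ0 hne
      exact absurd (Finset.mem_image.2 ⟨a, ha, hβa.symm⟩) hβ
    · rw [Set.not_nonempty_iff_eq_empty.1 hne, measure_empty]

/-- **Partial converse to the diagonal Duffin–Schaeffer theorem.**
If `ψ : P⁻¹ℤ → ℝ_{≥0}` satisfies `ψ(γ) ≤ 1/(2L(γ))` and the series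
`Σ_γ φ(n)ψ(γ)^{r+1}/n` converges, then `λ(𝒜(ψ)) = 0`. -/
theorem diagonal_duffin_schaeffer_converse (r : ℕ) (p : Fin r → ℕ)
    [∀ i, Fact (p i).Prime] (hinj : Function.Injective p)
    (ψ : ℚ → ℝ) (hψ0 : ∀ γ, 0 ≤ ψ γ) (hψL : ∀ γ, ψ γ ≤ 1 / (2 * LP r p γ))
    (hconv : ∑' γ : (PinvZ r p), ENNReal.ofReal (dsWeight r p ψ γ) ≠ ⊤) :
    lamP r p (Apsi r p ψ) = 0 := by
  have hsum : ∑' bg : ℚ × ℚ, lamP r p (Sbg r p ψ bg.1 bg.2) ≠ ⊤ := by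
    have h1 : ∑' bg : ℚ × ℚ, lamP r p (Sbg r p ψ bg.1 bg.2) =
        ∑' γ : ℚ, ∑' β : ℚ, lamP r p (Sbg r p ψ β γ) := by
      rw [ENNReal.tsum_prod', ENNReal.tsum_comm]
    have h2 : ∑' γ : ℚ, ∑' β : ℚ, lamP r p (Sbg r p ψ β γ) ≤
        4 * ∑' γ : (PinvZ r p), ENNReal.ofReal (dsWeight r p ψ γ) := by
      refine (ENNReal.tsum_le_tsum fun γ => S_sum hinj ψ hψ0 hψL γ).trans ?_
      rw [← tsum_subtype (PinvZ r p) (fun γ => 4 * ENNReal.ofReal (dsWeight r p ψ γ)),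
        ENNReal.tsum_mul_left]
    rw [h1]
    exact ne_top_of_le_ne_top (ENNReal.mul_ne_top (by simp) hconv) h2
  have hae := ae_finite_setOfPred_mem hsum
  refine measure_mono_null ?_ (ae_iff.1 hae)
  intro x hx hfin
  refine hx.2 (hfin.subset ?_)
  rintro ⟨β, γ⟩ ⟨-, h2, h3, h4⟩
  exact ⟨hx.1, h2, h3, h4⟩
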